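/- In the special case a = α = β = 0 (so b = N), the following initial-value formulas hold: (i) R̂_0(s) = √(2s+1)/N for every integer s with 0 ≤ s ≤ N−1 (in particular R̂_0(N−1) = √(2N−1)/N and R̂_0(s) = √((2s+1)/(2s+3))·R̂_0(s+1)); (ii) R̂_1(s) = −(N² − 2s² − 2s − 1)·√3/(N²−1)·R̂_0(s) for every integer s with 0 ≤ s ≤ N−1; and (iii) R̂_{n+1}(N−1) = [(N−n−1)/(N+n+1)]·√((2n+3)/(2n+1))·R̂_n(N−1) for every integer n with 0 ≤ n ≤ N−2. -/

import Mathlib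

open Finset

/-- Rising Pochhammer symbol `(x)_k = x (x+1) ⋯ (x+k-1)` for a real `x`. -/
noncomputable def pochR (x : ℝ) (k : ℕ) : ℝ := ∏ i ∈ Finset.range k, (x + i)

/-- The `n`-th Racah polynomial in Zhu's normalization. -/
noncomputable def racahR (a b α β : ℝ) (n : ℕ) (s : ℝ) : ℝ :=
  (1 / (Nat.factorial n : ℝ)) * pochR (a + b + α + 1) n * pochR (β + 1) n *
    pochR (a - b + 1) n *
    ∑ k ∈ Finset.range (n + 1),
      pochR (-(n : ℝ)) k * pochR (a - s) k * pochR (a + s + 1) k *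
          pochR (α + β + (n : ℝ) + 1) k /
        (pochR (β + 1) k * pochR (a + b + α + 1) k * pochR (a - b + 1) k *
          (Nat.factorial k : ℝ))

/-- The Racah weight function `ρ(s)`. -/
noncomputable def racahW (a b α β : ℝ) (s : ℝ) : ℝ :=
  Real.Gamma (a + s + 1) * Real.Gamma (b + s + α + 1) * Real.Gamma (b + α - s) *
      Real.Gamma (s - a + β + 1) /
    (Real.Gamma (b + s + 1) * Real.Gamma (b - s) * Real.Gamma (s - a + 1) *
      Real.Gamma (a - β + s + 1))

/-- The squared norm `d_n²`. -/
noncomputable def racahD2 (a b α β : ℝ) (n : ℕ) : ℝ :=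
  Real.Gamma (α + n + 1) * Real.Gamma (β + n + 1) * Real.Gamma (a + b + α + n + 1) *
      Real.Gamma (b - a + α + β + n + 1) /
    ((α + β + 2 * n + 1) * Real.Gamma (n + 1) * Real.Gamma (b - a - n) *
      Real.Gamma (α + β + n + 1) * Real.Gamma (a + b - n - β))

/-- The weighted Racah polynomial `R̂_n(s) = R_n(s) √(ρ(s)(2s+1)/d_n²)`. -/
noncomputable def racahHat (a b α β : ℝ) (n : ℕ) (s : ℝ) : ℝ :=
  racahR a b α β n s * Real.sqrt (racahW a b α β s * (2 * s + 1) / racahD2 a b α β n)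

/-- `σ(s) = (s−a)(s+b)(s+a−β)(b+α−s)`. -/
noncomputable def racahSigma (a b α β : ℝ) (s : ℝ) : ℝ :=
  (s - a) * (s + b) * (s + a - β) * (b + α - s)

/-- `τ(s)`. -/
noncomputable def racahTau (a b α β : ℝ) (s : ℝ) : ℝ :=
  a * (α + 1) * (a - β) + b * (b + α) * (β + 1) - (α + 1) * (β + 1) -
    s * (s + 1) * (α + β + 2)

/-- `λ_n = n (n+α+β+1)`. -/
noncomputable def racahLam (α β : ℝ) (n : ℕ) : ℝ := (n : ℝ) * ((n : ℝ) + α + β + 1)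

/-! At `s = b - 1` the factor `(a - s)_k` of the Racah sum cancels against `(a - b + 1)_k`. What is
left is a terminating balanced `₃F₂(1)`, which the Pfaff–Saalschütz theorem evaluates in closed
form, and the value at `n + 1` is then an explicit multiple of the value at `n`. Dividing by the
square root of `d_{n+1}² / d_n²`, a rational function of the parameters, gives the recursion for the
weighted polynomials. For `α = β = 0` the Gamma factors of `ρ` cancel in pairs, so that `ρ = 1`. -/

lemma pochR_zero (x : ℝ) : pochR x 0 = 1 := prod_range_zero _

lemma pochR_succ (x : ℝ) (k : ℕ) : pochR x (k + 1) = pochR x k * (x + k) :=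
  prod_range_succ _ _

lemma pochR_succ_left (x : ℝ) (k : ℕ) : pochR x (k + 1) = x * pochR (x + 1) k := by
  simp only [pochR, prod_range_succ', Nat.cast_zero, add_zero, Nat.cast_succ, mul_comm x,
    add_assoc, add_comm (1 : ℝ)]

lemma pochR_neg_natCast_self_succ (n : ℕ) : pochR (-(n : ℝ)) (n + 1) = 0 := by
  rw [pochR_succ, neg_add_cancel, mul_zero]

lemma pochR_pos {x : ℝ} (hx : 0 < x) (k : ℕ) : 0 < pochR x k :=
  prod_pos fun _ _ => by positivity

lemma pochR_ne_zero_of_add_lt_one {x : ℝ} {k : ℕ} (h : x + k < 1) : pochR x k ≠ 0 := by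
  refine prod_ne_zero_iff.2 fun i hi => ?_
  have hik : (i : ℝ) + 1 ≤ k := by exact_mod_cast mem_range.1 hi
  exact ne_of_lt (by linarith)

/-- The `k`-th term of the terminating balanced series `₃F₂(-n, x, c + d - x + n - 1; c, d; 1)`.
The third numerator parameter is the one that makes the series balanced. -/
noncomputable def saalschutzTerm (x c d : ℝ) (n k : ℕ) : ℝ :=
  pochR (-(n : ℝ)) k * pochR x k * pochR (c + d - x + n - 1) k /
    (pochR c k * pochR d k * (k.factorial : ℝ))

lemma saalschutzTerm_self_succ (x c d : ℝ) (n : ℕ) : saalschutzTerm x c d n (n + 1) = 0 := by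
  simp only [saalschutzTerm, pochR_neg_natCast_self_succ, zero_mul, zero_div]

-- The right-hand side is the Wilf–Zeilberger certificate of the Pfaff–Saalschütz sum.
lemma sum_saalschutzTerm_succ_sub {x c d : ℝ} (n : ℕ) {m : ℕ}
    (hc : pochR c m ≠ 0) (hd : pochR d m ≠ 0) :
    ∑ k ∈ range (m + 1), ((c + n) * (d + n) * saalschutzTerm x c d (n + 1) k -
        (c - x + n) * (d - x + n) * saalschutzTerm x c d n k) =
      (c + d - x + 2 * n) *
        (pochR (-(n : ℝ)) m * pochR x (m + 1) * pochR (c + d - x + n) m /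
          (pochR c m * pochR d m * (m.factorial : ℝ))) := by
  induction m with
  | zero =>
    simp only [saalschutzTerm, pochR_succ, pochR_zero, zero_add, range_one, sum_singleton,
      Nat.factorial_zero, Nat.cast_zero, Nat.cast_one]
    ring
  | succ m ih =>
    rw [pochR_succ, mul_ne_zero_iff] at hc hd
    obtain ⟨hc, hcm⟩ := hc
    obtain ⟨hd, hdm⟩ := hd
    have shift_n : pochR (-((n + 1 : ℕ) : ℝ)) (m + 1) = -(n + 1) * pochR (-(n : ℝ)) m := by
      rw [pochR_succ_left]; push_cast; ring_nf
    have shift_top : pochR (c + d - x + n - 1) (m + 1) =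
        (c + d - x + n - 1) * pochR (c + d - x + n) m := by
      rw [pochR_succ_left, sub_add_cancel]
    have shift_top' : c + d - x + ((n + 1 : ℕ) : ℝ) - 1 = c + d - x + n := by
      push_cast; ring
    rw [sum_range_succ, ih hc hd]
    simp only [saalschutzTerm, shift_n, shift_top, shift_top']
    simp only [pochR_succ, Nat.factorial_succ]
    push_cast
    field_simp
    ring

theorem pfaff_saalschutz {x c d : ℝ} {n : ℕ} (hc : pochR c n ≠ 0) (hd : pochR d n ≠ 0) :
    (∑ k ∈ range (n + 1), saalschutzTerm x c d n k) * (pochR c n * pochR d n) =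
      pochR (c - x) n * pochR (d - x) n := by
  induction n with
  | zero => simp [saalschutzTerm, pochR_zero]
  | succ n ih =>
    have telescoped : (c + n) * (d + n) * ∑ k ∈ range (n + 2), saalschutzTerm x c d (n + 1) k =
        (c - x + n) * (d - x + n) * ∑ k ∈ range (n + 1), saalschutzTerm x c d n k := by
      have h := sum_saalschutzTerm_succ_sub (x := x) n hc hd
      rw [pochR_neg_natCast_self_succ, zero_mul, zero_mul, zero_div, mul_zero, sum_sub_distrib,
        ← mul_sum, ← mul_sum, sum_range_succ (saalschutzTerm x c d n), saalschutzTerm_self_succ,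
        add_zero] at h
      exact sub_eq_zero.1 h
    rw [pochR_succ, mul_ne_zero_iff] at hc hd
    simp only [pochR_succ]
    linear_combination pochR c n * pochR d n * telescoped +
      (c - x + n) * (d - x + n) * ih hc.1 hd.1

section Racah

variable {a b α β s : ℝ} {n : ℕ}

lemma racahR_zero (a b α β s : ℝ) : racahR a b α β 0 s = 1 := by
  simp [racahR, pochR_zero]

lemma racahR_one (hβ : β + 1 ≠ 0) (hα : a + b + α + 1 ≠ 0) (hab : a - b + 1 ≠ 0) :
    racahR a b α β 1 s = (a + b + α + 1) * (β + 1) * (a - b + 1) -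
      (a - s) * (a + s + 1) * (α + β + 2) := by
  simp only [racahR, pochR, sum_range_succ, range_zero, sum_empty, prod_range_succ,
    Nat.factorial_zero, Nat.factorial_one, Nat.cast_zero, Nat.cast_one, add_zero]
  field_simp
  ring

theorem racahR_sub_one (hβ : -1 < β) (hα : 0 < a + b + α + 1) (hab : a + n < b) :
    racahR a b α β n (b - 1) =
      pochR (α + 1) n * pochR (a - b + 1) n * pochR (β + 1 - (a + b)) n / n.factorial := by
  have hβ_pos := pochR_pos (neg_lt_iff_pos_add.1 hβ) n
  have hα_pos := pochR_pos hα n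
  have term_eq : ∀ k ∈ range (n + 1),
      pochR (-(n : ℝ)) k * pochR (a - (b - 1)) k * pochR (a + (b - 1) + 1) k *
          pochR (α + β + n + 1) k /
        (pochR (β + 1) k * pochR (a + b + α + 1) k * pochR (a - b + 1) k * k.factorial) =
      saalschutzTerm (a + b) (β + 1) (a + b + α + 1) n k := by
    intro k hk
    have hkn : (k : ℝ) ≤ n := by exact_mod_cast mem_range_succ_iff.1 hk
    have h_cancel : pochR (a - b + 1) k ≠ 0 := pochR_ne_zero_of_add_lt_one (by linarith)
    rw [eq_comm, saalschutzTerm, ← mul_div_mul_right _ _ h_cancel]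
    congr 1 <;> ring_nf
  have h_sum := pfaff_saalschutz (x := a + b) hβ_pos.ne' hα_pos.ne'
  rw [show a + b + α + 1 - (a + b) = α + 1 by ring] at h_sum
  rw [racahR, sum_congr rfl term_eq]
  linear_combination pochR (a - b + 1) n / n.factorial * h_sum

theorem racahR_succ_sub_one (hβ : -1 < β) (hα : 0 < a + b + α + 1) (hab : a + n + 1 < b) :
    racahR a b α β (n + 1) (b - 1) =
      (α + n + 1) * (b - a - n - 1) * (a + b - n - 1 - β) / (n + 1) *
        racahR a b α β n (b - 1) := by
  rw [racahR_sub_one hβ hα (by push_cast; linarith), racahR_sub_one hβ hα (by linarith)]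
  simp only [pochR_succ, Nat.factorial_succ]
  push_cast
  field_simp
  ring

/-- The quotient `d_{n+1}² / d_n²` of consecutive squared norms, with all Gamma factors
cancelled. -/
noncomputable def racahD2Ratio (a b α β : ℝ) (n : ℕ) : ℝ :=
  (α + n + 1) * (β + n + 1) * (a + b + α + n + 1) * (b - a + α + β + n + 1) * (b - a - n - 1) *
      (a + b - n - 1 - β) * (α + β + 2 * n + 1) /
    ((n + 1) * (α + β + n + 1) * (α + β + 2 * n + 3))

lemma racahD2Ratio_pos (hα : -1 < α) (hβ : -1 < β) (hαβ : 0 < α + β + n + 1)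
    (hab : a + n + 1 < b) (hβab : β + n + 1 < a + b) : 0 < racahD2Ratio a b α β n := by
  have := n.cast_nonneg (α := ℝ)
  unfold racahD2Ratio
  repeat' first | apply div_pos | apply mul_pos
  all_goals linarith

theorem racahD2_succ (hα : -1 < α) (hβ : -1 < β) (hαβ : 0 < α + β + n + 1)
    (hab : a + n + 1 < b) (hβab : β + n + 1 < a + b) :
    racahD2 a b α β (n + 1) = racahD2 a b α β n * racahD2Ratio a b α β n := by
  have := n.cast_nonneg (α := ℝ)
  have gamma_eq (x y : ℝ) (hy : 0 < y) (hx : x = y + 1) :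
      Real.Gamma x = y * Real.Gamma y := by rw [hx, Real.Gamma_add_one hy.ne']
  have h_ab : 0 < b - a - n - 1 := by linarith
  have h_abβ : 0 < a + b - n - 1 - β := by linarith
  have h_cancel : (b - a - n - 1) * (a + b - n - 1 - β) * (α + β + 2 * n + 1) ≠ 0 :=
    (mul_pos (mul_pos h_ab h_abβ) (by linarith)).ne'
  rw [racahD2, racahD2, racahD2Ratio]
  push_cast
  rw [gamma_eq (α + (n + 1) + 1) (α + n + 1) (by linarith) (by ring),
    gamma_eq (β + (n + 1) + 1) (β + n + 1) (by linarith) (by ring),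
    gamma_eq (a + b + α + (n + 1) + 1) (a + b + α + n + 1) (by linarith) (by ring),
    gamma_eq (b - a + α + β + (n + 1) + 1) (b - a + α + β + n + 1) (by linarith) (by ring),
    gamma_eq (n + 1 + 1) (n + 1) (by linarith) rfl,
    gamma_eq (α + β + (n + 1) + 1) (α + β + n + 1) hαβ (by ring),
    gamma_eq (b - a - n) (b - a - n - 1) h_ab (by ring),
    gamma_eq (a + b - n - β) (a + b - n - 1 - β) h_abβ (by ring),
    show b - a - (n + 1) = b - a - n - 1 by ring,
    show a + b - (n + 1) - β = a + b - n - 1 - β by ring,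
    show α + β + 2 * ((n : ℝ) + 1) + 1 = α + β + 2 * n + 3 by ring,
    div_mul_div_comm, ← mul_div_mul_right _ _ h_cancel]
  congr 1 <;> ring

theorem racahHat_succ_of_racahR_succ (hα : -1 < α) (hβ : -1 < β) (hαβ : 0 < α + β + n + 1)
    (hab : a + n + 1 < b) (hβab : β + n + 1 < a + b) {q : ℝ}
    (hq : racahR a b α β (n + 1) s = q * racahR a b α β n s) :
    racahHat a b α β (n + 1) s =
      q / √(racahD2Ratio a b α β n) * racahHat a b α β n s := by
  rw [racahHat, racahHat, hq, racahD2_succ hα hβ hαβ hab hβab, ← div_div,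
    Real.sqrt_div' _ (racahD2Ratio_pos hα hβ hαβ hab hβab).le]
  ring

lemma racahW_of_alpha_beta_eq_zero (hs : |a| - 1 < s) (hsb : s < b) (hb : |a| < b) :
    racahW a b 0 0 s = 1 := by
  have ha := neg_abs_le a
  have ha' := le_abs_self a
  have h₁ := (Real.Gamma_pos_of_pos (by linarith : 0 < a + s + 1)).ne'
  have h₂ := (Real.Gamma_pos_of_pos (by linarith : 0 < b + s + 1)).ne'
  have h₃ := (Real.Gamma_pos_of_pos (by linarith : 0 < b - s)).ne'
  have h₄ := (Real.Gamma_pos_of_pos (by linarith : 0 < s - a + 1)).ne'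
  simp only [racahW, add_zero, sub_zero]
  field_simp

lemma racahD2_zero_of_alpha_beta_eq_zero (hb : |a| < b) : racahD2 a b 0 0 0 = b ^ 2 - a ^ 2 := by
  obtain ⟨h_neg, h_lt⟩ := abs_lt.1 hb
  have h_sum : 0 < a + b := by linarith
  have h_diff : 0 < b - a := by linarith
  have h₁ := (Real.Gamma_pos_of_pos h_sum).ne'
  have h₂ := (Real.Gamma_pos_of_pos h_diff).ne'
  simp only [racahD2, Nat.cast_zero, add_zero, sub_zero, mul_zero, zero_add, Real.Gamma_one,
    Real.Gamma_add_one h_sum.ne', Real.Gamma_add_one h_diff.ne']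
  field_simp
  ring

theorem racahHat_zero_of_alpha_beta_eq_zero (hs : |a| - 1 < s) (hsb : s < b) (hb : |a| < b) :
    racahHat a b 0 0 0 s = √((2 * s + 1) / (b ^ 2 - a ^ 2)) := by
  rw [racahHat, racahR_zero, racahW_of_alpha_beta_eq_zero hs hsb hb,
    racahD2_zero_of_alpha_beta_eq_zero hb, one_mul, one_mul]

lemma sqrt_racahD2Ratio_of_params_eq_zero (hb : (n : ℝ) + 1 < b) :
    √(racahD2Ratio 0 b 0 0 n) =
      (b + n + 1) * (b - n - 1) / √((2 * n + 3) / (2 * n + 1)) := by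
  have h_pos : 0 ≤ (b + n + 1) * (b - n - 1) :=
    mul_nonneg (by linarith [n.cast_nonneg (α := ℝ)]) (by linarith)
  have h_eq : racahD2Ratio 0 b 0 0 n =
      ((b + n + 1) * (b - n - 1)) ^ 2 / ((2 * n + 3) / (2 * n + 1)) := by
    simp only [racahD2Ratio]
    field_simp
    ring
  rw [h_eq, Real.sqrt_div' _ (by positivity), Real.sqrt_sq h_pos]

end Racah

section ZeroParameters

variable {b : ℝ}

theorem racahHat_zero_of_params_eq_zero {s : ℝ} (hs : -1 < s) (hsb : s < b) (hb : 0 < b) :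
    racahHat 0 b 0 0 0 s = √(2 * s + 1) / b := by
  rw [racahHat_zero_of_alpha_beta_eq_zero (by simpa using hs) hsb (by simpa using hb),
    zero_pow two_ne_zero, sub_zero, Real.sqrt_div' _ (sq_nonneg b), Real.sqrt_sq hb.le]

theorem racahHat_one_of_params_eq_zero (hb : 1 < b) (s : ℝ) :
    racahHat 0 b 0 0 1 s =
      -(b ^ 2 - 2 * s ^ 2 - 2 * s - 1) * √3 / (b ^ 2 - 1) * racahHat 0 b 0 0 0 s := by
  have h_R : racahR 0 b 0 0 1 s = -(b ^ 2 - 2 * s ^ 2 - 2 * s - 1) * racahR 0 b 0 0 0 s := by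
    rw [racahR_zero, racahR_one (by norm_num) (by linarith) (by linarith)]
    ring
  have h_norm : √(racahD2Ratio 0 b 0 0 0) = (b ^ 2 - 1) / √3 := by
    rw [sqrt_racahD2Ratio_of_params_eq_zero (by simpa using hb)]
    simp only [Nat.cast_zero]
    ring_nf
  have h_hat := racahHat_succ_of_racahR_succ (n := 0) (by norm_num) (by norm_num) (by norm_num)
    (by simpa using hb) (by simpa using hb) h_R
  rwa [h_norm, div_div_eq_mul_div] at h_hat

theorem racahHat_succ_sub_one_of_params_eq_zero {n : ℕ} (hn : (n : ℝ) + 1 < b) :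
    racahHat 0 b 0 0 (n + 1) (b - 1) =
      (b - n - 1) / (b + n + 1) * √((2 * n + 3) / (2 * n + 1)) *
        racahHat 0 b 0 0 n (b - 1) := by
  have := n.cast_nonneg (α := ℝ)
  have h_R := racahR_succ_sub_one (a := 0) (b := b) (α := 0) (β := 0) (n := n)
    (by norm_num) (by linarith) (by linarith)
  have h_sub : b - n - 1 ≠ 0 := by linarith
  have h_add : b + n + 1 ≠ 0 := by linarith
  rw [racahHat_succ_of_racahR_succ (by norm_num) (by norm_num) (by linarith)
    (by linarith) (by linarith) h_R, sqrt_racahD2Ratio_of_params_eq_zero hn]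
  simp only [zero_add, sub_zero]
  field_simp

end ZeroParameters

theorem racah_special_case_initial_values_general {b : ℝ} (hb : 1 < b) :
    (∀ s : ℝ, -1 / 2 ≤ s → s < b → racahHat 0 b 0 0 0 s = √(2 * s + 1) / b) ∧
      racahHat 0 b 0 0 0 (b - 1) = √(2 * b - 1) / b ∧
      (∀ s : ℝ, -1 / 2 ≤ s → s + 1 < b →
        racahHat 0 b 0 0 0 s =
          √((2 * s + 1) / (2 * s + 3)) * racahHat 0 b 0 0 0 (s + 1)) ∧
      (∀ s : ℝ, -1 / 2 ≤ s → s < b →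
        racahHat 0 b 0 0 1 s =
          -(b ^ 2 - 2 * s ^ 2 - 2 * s - 1) * √3 / (b ^ 2 - 1) * racahHat 0 b 0 0 0 s) ∧
      (∀ n : ℕ, (n : ℝ) + 1 < b →
        racahHat 0 b 0 0 (n + 1) (b - 1) =
          (b - n - 1) / (b + n + 1) * √((2 * n + 3) / (2 * n + 1)) *
            racahHat 0 b 0 0 n (b - 1)) := by
  have hat_zero (s : ℝ) (hs : -1 / 2 ≤ s) (hsb : s < b) :
      racahHat 0 b 0 0 0 s = √(2 * s + 1) / b :=
    racahHat_zero_of_params_eq_zero (by linarith) hsb (by linarith)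
  refine ⟨hat_zero, ?_, fun s hs hsb => ?_, fun s _ _ => racahHat_one_of_params_eq_zero hb s,
    fun n => racahHat_succ_sub_one_of_params_eq_zero⟩
  · rw [hat_zero _ (by linarith) (by linarith)]
    ring_nf
  · have h_sqrt : √(2 * s + 3) ≠ 0 := Real.sqrt_ne_zero'.2 (by linarith)
    rw [hat_zero s hs (by linarith), hat_zero (s + 1) (by linarith) hsb,
      show 2 * (s + 1) + 1 = 2 * s + 3 by ring, Real.sqrt_div (by linarith)]
    field_simp

theorem racah_special_case_initial_values
    (N : ℕ) (hN : 2 ≤ N) :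
    (∀ s : ℕ, s ≤ N - 1 →
        racahHat 0 (N : ℝ) 0 0 0 (s : ℝ) = Real.sqrt (2 * (s : ℝ) + 1) / (N : ℝ)) ∧
      racahHat 0 (N : ℝ) 0 0 0 ((N : ℝ) - 1) =
        Real.sqrt (2 * (N : ℝ) - 1) / (N : ℝ) ∧
      (∀ s : ℕ, s ≤ N - 2 →
        racahHat 0 (N : ℝ) 0 0 0 (s : ℝ) =
          Real.sqrt ((2 * (s : ℝ) + 1) / (2 * (s : ℝ) + 3)) *
            racahHat 0 (N : ℝ) 0 0 0 ((s : ℝ) + 1)) ∧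
      (∀ s : ℕ, s ≤ N - 1 →
        racahHat 0 (N : ℝ) 0 0 1 (s : ℝ) =
          -((N : ℝ) ^ 2 - 2 * (s : ℝ) ^ 2 - 2 * (s : ℝ) - 1) * Real.sqrt 3 /
              ((N : ℝ) ^ 2 - 1) *
            racahHat 0 (N : ℝ) 0 0 0 (s : ℝ)) ∧
      (∀ n : ℕ, n ≤ N - 2 →
        racahHat 0 (N : ℝ) 0 0 (n + 1) ((N : ℝ) - 1) =
          (((N : ℝ) - n - 1) / ((N : ℝ) + n + 1)) *
            Real.sqrt ((2 * (n : ℝ) + 3) / (2 * (n : ℝ) + 1)) *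
            racahHat 0 (N : ℝ) 0 0 n ((N : ℝ) - 1)) := by
  obtain ⟨hat_zero, hat_zero_last, hat_zero_step, hat_one, hat_succ_last⟩ :=
    racah_special_case_initial_values_general (b := N) (by exact_mod_cast hN)
  have neg_half_le (s : ℕ) : (-1 / 2 : ℝ) ≤ s := by linarith [s.cast_nonneg (α := ℝ)]
  have lt_N {s : ℕ} (hs : s ≤ N - 1) : (s : ℝ) < N := by exact_mod_cast (by omega : s < N)
  have succ_lt_N {s : ℕ} (hs : s ≤ N - 2) : (s : ℝ) + 1 < N := by
    exact_mod_cast (by omega : s + 1 < N)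
  exact ⟨fun s hs => hat_zero s (neg_half_le s) (lt_N hs), hat_zero_last,
    fun s hs => hat_zero_step s (neg_half_le s) (succ_lt_N hs),
    fun s hs => hat_one s (neg_half_le s) (lt_N hs), fun n hn => hat_succ_last n (succ_lt_N hn)⟩
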